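/- Let r > 0, a > 0, b > 0, and set α = √(2/r)·(√a − √b), β = √(r/2)·(√a + √b), k = (√a − √b)/(√a + √b). Let sn, cn, dn : ℝ → ℝ be differentiable functions satisfying sn' = cn·dn, cn' = −sn·dn, dn' = −k²·sn·cn with sn(0) = 0, cn(0) = 1, dn(0) = 1. Then the function y(t) = α·sn(βt) satisfies y(0) = 0, y'(0) = a − b, and the Duffing equation y''(t) = −r·y(t)·(a + b − (r/2)·y(t)²) for all t ∈ ℝ. -/

import Mathlib

/-!
The equations for `sn`, `cn`, `dn` conserve `sn² + cn²` and `dn² + k² sn²`, both equal to `1` at `0`.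
Hence `sn'' = -sn (dn² + k² cn²) = -sn (1 + k² - 2 k² sn²)`, and the chain rule gives
`y'' = -y (β² (1 + k²) - 2 β² k² sn²)`. The Duffing equation and the initial velocity then reduce to
the parameter identities `α β = a - b`, `β² (1 + k²) = r (a + b)` and `2 β² k² = (r² / 2) α²`.
-/

/-- The function `y(t) = α sn(βt)` with `α = √(2/r)(√a − √b)`,
`β = √(r/2)(√a + √b)`, `k = (√a − √b)/(√a + √b)` solves the Duffing equation
`y'' = −r y (a + b − (r/2) y²)` with `y(0) = 0`, `y'(0) = a − b`. -/
theorem duffing_solution_elliptic (r a b : ℝ) (hr : r > 0) (ha : a > 0) (hb : b > 0)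
    (α β k : ℝ)
    (hα : α = Real.sqrt (2 / r) * (Real.sqrt a - Real.sqrt b))
    (hβ : β = Real.sqrt (r / 2) * (Real.sqrt a + Real.sqrt b))
    (hk : k = (Real.sqrt a - Real.sqrt b) / (Real.sqrt a + Real.sqrt b))
    (sn cn dn : ℝ → ℝ)
    (hsn : ∀ t : ℝ, HasDerivAt sn (cn t * dn t) t)
    (hcn : ∀ t : ℝ, HasDerivAt cn (-(sn t * dn t)) t)
    (hdn : ∀ t : ℝ, HasDerivAt dn (-(k ^ 2 * sn t * cn t)) t)
    (hsn0 : sn 0 = 0) (hcn0 : cn 0 = 1) (hdn0 : dn 0 = 1)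
    (y : ℝ → ℝ) (hy : ∀ t : ℝ, y t = α * sn (β * t)) :
    y 0 = 0 ∧ deriv y 0 = a - b ∧
      (∀ t : ℝ, deriv (deriv y) t = -r * y t * (a + b - r / 2 * (y t) ^ 2)) := by
  have hs : 0 < Real.sqrt a + Real.sqrt b :=
    add_pos (Real.sqrt_pos.2 ha) (Real.sqrt_pos.2 hb)
  have hsa : Real.sqrt a ^ 2 = a := Real.sq_sqrt ha.le
  have hsb : Real.sqrt b ^ 2 = b := Real.sq_sqrt hb.le
  have hr1 : Real.sqrt (r / 2) ^ 2 = r / 2 := Real.sq_sqrt (by positivity)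
  have hr2 : Real.sqrt (2 / r) ^ 2 = 2 / r := Real.sq_sqrt (by positivity)
  have hr12 : Real.sqrt (2 / r) * Real.sqrt (r / 2) = 1 := by
    rw [← Real.sqrt_mul (by positivity), show 2 / r * (r / 2) = 1 by field_simp, Real.sqrt_one]
  have hβk : β * k = Real.sqrt (r / 2) * (Real.sqrt a - Real.sqrt b) := by
    rw [hβ, hk]; field_simp
  have hβ2 : β ^ 2 = r / 2 * (Real.sqrt a + Real.sqrt b) ^ 2 := by
    rw [hβ, mul_pow, hr1]
  have hβk2 : β ^ 2 * k ^ 2 = r / 2 * (Real.sqrt a - Real.sqrt b) ^ 2 := by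
    rw [← mul_pow, hβk, mul_pow, hr1]
  have hαβ : α * β = a - b := by
    rw [hα, hβ]
    linear_combination (Real.sqrt a ^ 2 - Real.sqrt b ^ 2) * hr12 + hsa - hsb
  have hlin : β ^ 2 * (1 + k ^ 2) = r * (a + b) := by
    linear_combination hβ2 + hβk2 + r * hsa + r * hsb
  have hcub : 2 * (β ^ 2 * k ^ 2) = r ^ 2 / 2 * α ^ 2 := by
    rw [hβk2, hα, mul_pow, hr2]; field_simp
  have hpyth : ∀ t, sn t ^ 2 + cn t ^ 2 = 1 := by
    have hd : ∀ t, HasDerivAt (fun t => sn t ^ 2 + cn t ^ 2) 0 t := fun t =>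
      (((hsn t).pow 2).add ((hcn t).pow 2)).congr_deriv (by push_cast; ring)
    intro t
    have h := is_const_of_deriv_eq_zero (fun t => (hd t).differentiableAt)
      (fun t => (hd t).deriv) t 0
    simpa [hsn0, hcn0] using h
  have hpyth' : ∀ t, dn t ^ 2 + k ^ 2 * sn t ^ 2 = 1 := by
    have hd : ∀ t, HasDerivAt (fun t => dn t ^ 2 + k ^ 2 * sn t ^ 2) 0 t := fun t =>
      (((hdn t).pow 2).add (((hsn t).pow 2).const_mul (k ^ 2))).congr_deriv (by push_cast; ring)
    intro t
    have h := is_const_of_deriv_eq_zero (fun t => (hd t).differentiableAt)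
      (fun t => (hd t).deriv) t 0
    simpa [hsn0, hdn0] using h
  have hlinear : ∀ t, HasDerivAt (fun t => β * t) β t := fun t => by
    simpa using (hasDerivAt_id t).const_mul β
  have hy1 : deriv y = fun t => α * (cn (β * t) * dn (β * t) * β) := by
    funext t
    rw [show y = fun t => α * sn (β * t) from funext hy]
    exact (((hsn (β * t)).comp t (hlinear t)).const_mul α).deriv
  refine ⟨by simp [hy, hsn0], by simp [hy1, hcn0, hdn0, hαβ], fun t => ?_⟩
  have hy2 := (((((hcn (β * t)).comp t (hlinear t)).mul
    ((hdn (β * t)).comp t (hlinear t))).mul_const β).const_mul α).deriv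
  rw [hy1, hy]
  refine hy2.trans ?_
  simp only [Function.comp_apply]
  linear_combination (-α * β ^ 2 * sn (β * t)) * hpyth' (β * t)
    - α * β ^ 2 * sn (β * t) * k ^ 2 * hpyth (β * t)
    - α * sn (β * t) * hlin + α * sn (β * t) ^ 3 * hcub
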